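/- Let (W, S) be a Coxeter system with length function ℓ, Bruhat order ≤, and absolute length ℓᵃ (where ℓᵃ(w) is the minimal number k such that w is a product of k reflections, i.e. of k conjugates of elements of S). If w and σ are involutions in W with w ≤ σ in the Bruhat order and ℓ(w) + ℓᵃ(w) = ℓ(σ) + ℓᵃ(σ), then w = σ. -/

import Mathlib

/-!
Write `ρ(w) = (ℓ(w) + ℓᵃ(w)) / 2`. The proof shows that `ρ` is strictly increasing for Bruhat order
on involutions, by induction on `ℓ(σ)`. Choose a descent `s` of `σ`. For an involution `x` with
descent `s`, let `x'` be `x s` if `s` commutes with `x` and `s x s` otherwise; for an involution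
without descent `s`, let `x' = x`. Three facts suffice.

* `w ≤ σ` implies `w' ≤ σ'` (`BruhatLE.lowerInvol`). This follows from the lifting property, stated
  as monotonicity of `x ↦ min(x, x s)` (`BruhatLE.lowerCoset`), applied on the right and, through
  inversion, on the left.
* `ρ(x') = ρ(x) - 1` if `s` is a descent of `x` (`rank_lowerInvol`). In the commuting case one
  needs `ℓᵃ(x s) = ℓᵃ(x) - 1`.
* Among involutions with descent `s`, `x` is determined by `x'` (`lowerInvol_injective`).

Both the lifting property and the second fact come from the geometric representation `V`. Its key
property is that `w αₛ` is a nonnegative combination of simple roots whenever `ℓ(w s) > ℓ(w)`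
(`geomRep_simpleRoot_nonneg`). Consequently, for a reflection `t` with positive root `β`,
`ℓ(u) < ℓ(u t)` if and only if `u β` is positive (`IsPosRootOf.lt_length_mul_iff`), which yields the
lifting property. For the second fact, `dim (1 - w) V ≤ ℓᵃ(w)` because each reflection moves only a
line; for involutions equality holds (`absLength_eq_finrank_moved`), since in the commuting step
`x s` fixes `αₛ`, so that passing from `x s` to `x` adds exactly `αₛ` to the moved space.
-/

/-!
Statement 1. Let `(W, S)` be a Coxeter system with length function `ℓ`, Bruhat order `≤`, and
absolute length `ℓᵃ` (minimal number of reflections needed to write an element as a product of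
reflections). If `w` and `σ` are involutions in `W` with `w ≤ σ` in the Bruhat order and
`ℓ(w) + ℓᵃ(w) = ℓ(σ) + ℓᵃ(σ)`, then `w = σ`.
-/

noncomputable section

namespace CoxeterSystem

variable {B W : Type*} [Group W] {M : CoxeterMatrix B} (cs : CoxeterSystem M W)

/-- The absolute length of `w`: the minimal number of reflections (conjugates of simple
reflections) needed to express `w` as a product of reflections. -/
def absLength (w : W) : ℕ :=
  sInf {n : ℕ | ∃ l : List W, l.length = n ∧ (∀ t ∈ l, cs.IsReflection t) ∧ l.prod = w}

/-- The Bruhat order on `W`: the reflexive-transitive closure of the relation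
`u < u·t` for `t` a reflection with `ℓ(u) < ℓ(u·t)`. -/
def BruhatLE : W → W → Prop :=
  Relation.ReflTransGen fun u v =>
    (∃ t, cs.IsReflection t ∧ v = u * t) ∧ cs.length u < cs.length v

/-! ### The geometric representation -/

/-- The linear functional `v ↦ 2 B(αᵢ, v)`, where `B(αᵢ, αⱼ) = -cos (π / M i j)`. When
`M i j = 0` (no relation), the convention `π / 0 = 0` gives the customary value `B(αᵢ, αⱼ) = -1`. -/
def simpleCoroot (M : CoxeterMatrix B) (i : B) : (B →₀ ℝ) →ₗ[ℝ] ℝ :=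
  Finsupp.linearCombination ℝ fun j => -(2 * Real.cos (Real.pi / M i j))

/-- Twice the canonical bilinear form on the geometric representation; roots have square `2`. -/
def rootForm (M : CoxeterMatrix B) : (B →₀ ℝ) →ₗ[ℝ] (B →₀ ℝ) →ₗ[ℝ] ℝ :=
  Finsupp.linearCombination ℝ (simpleCoroot M)

/-- The simple root `αᵢ`. -/
def simpleRoot (i : B) : B →₀ ℝ := Finsupp.single i 1

lemma rootForm_simpleRoot (M : CoxeterMatrix B) (i : B) :
    rootForm M (simpleRoot i) = simpleCoroot M i := by
  simp [rootForm, simpleRoot]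

lemma simpleCoroot_simpleRoot (M : CoxeterMatrix B) (i j : B) :
    simpleCoroot M i (simpleRoot j) = -(2 * Real.cos (Real.pi / M i j)) := by
  simp [simpleCoroot, simpleRoot]

lemma simpleCoroot_self (M : CoxeterMatrix B) (i : B) :
    simpleCoroot M i (simpleRoot i) = 2 := by
  simp [simpleCoroot_simpleRoot]

lemma rootForm_comm (M : CoxeterMatrix B) (x y : B →₀ ℝ) :
    rootForm M x y = rootForm M y x := by
  have h : rootForm M = (rootForm M).flip := by
    ext i j
    have h := simpleCoroot_simpleRoot M i j
    rw [M.symmetric, ← simpleCoroot_simpleRoot M j i, ← rootForm_simpleRoot,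
      ← rootForm_simpleRoot] at h
    simpa [simpleRoot] using h
  exact LinearMap.congr_fun (LinearMap.congr_fun h x) y

/-- The simple reflection `v ↦ v - 2 B(αᵢ, v) αᵢ`. -/
def simpleRefl (M : CoxeterMatrix B) (i : B) : (B →₀ ℝ) ≃ₗ[ℝ] (B →₀ ℝ) :=
  Module.reflection (simpleCoroot_self M i)

open Polynomial.Chebyshev in
/-- The simple reflections satisfy the Coxeter relations: `sᵢ sⱼ` is a rotation by `2π / m`. -/
lemma isLiftable_simpleRefl (M : CoxeterMatrix B) : M.IsLiftable (simpleRefl M) := by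
  intro i j
  by_cases hij : i = j
  · subst hij
    rw [M.diagonal, pow_one]
    ext1 v
    exact Module.involutive_reflection (simpleCoroot_self M i) v
  have hm1 : M i j ≠ 1 := M.off_diagonal i j hij
  have hsymm : M j i = M i j := M.symmetric j i
  have hc := simpleCoroot_simpleRoot M i j
  have hc' := simpleCoroot_simpleRoot M j i
  rw [hsymm] at hc'
  generalize hm : M i j = m at *
  ext1 v
  have ht : 2 * Real.cos (2 * (Real.pi / m)) = simpleCoroot M i (simpleRoot j) *
      simpleCoroot M j (simpleRoot i) - 2 := by
    rw [hc, hc', Real.cos_two_mul]; ring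
  refine (Module.reflection_mul_reflection_pow_apply (simpleCoroot_self M i)
    (simpleCoroot_self M j) m v _ ht).trans ?_
  rw [LinearEquiv.coe_one, id]
  rcases Nat.lt_or_ge m 3 with h3 | h3
  · interval_cases m
    · simp
    · exact absurd rfl hm1
    · -- orthogonal simple roots, where `sin (2π / m) = 0`
      simp [hc, hc', mul_div_cancel₀]
      module
  have hmpos : (0 : ℝ) < m := by positivity
  set θ : ℝ := Real.pi / m with hθ
  have hmθ : m * θ = Real.pi := by rw [hθ]; field_simp
  have hθ0 : 0 < θ := by positivity
  have hsin : Real.sin (2 * θ) ≠ 0 := by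
    refine (Real.sin_pos_of_pos_of_lt_pi (by positivity) ?_).ne'
    rw [← hmθ]
    have : (3 : ℝ) ≤ m := by exact_mod_cast h3
    nlinarith
  rcases Nat.even_or_odd' m with ⟨k, hk | hk⟩
  · have e1 : ((m : ℤ) - 2) / 2 = k - 1 := by omega
    have e2 : ((m : ℤ) - 1) / 2 = k - 1 := by omega
    have h0 : (S ℝ ((k : ℤ) - 1)).eval (2 * Real.cos (2 * θ)) = 0 := by
      have := S_two_mul_real_cos (2 * θ) ((k : ℤ) - 1)
      have e : ((((k : ℤ) - 1 : ℤ) : ℝ) + 1) * (2 * θ) = Real.pi := by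
        rw [← hmθ, hk]; push_cast; ring
      rw [e, Real.sin_pi] at this
      exact (mul_eq_zero.mp this).resolve_right hsin
    rw [e1, e2, h0]
    simp
  · have e1 : ((m : ℤ) - 1) / 2 = k := by omega
    have e2 : ((m : ℤ) - 3) / 2 = k - 1 := by omega
    have e3 : (m : ℤ) / 2 = k := by omega
    have e4 : ((m : ℤ) - 2) / 2 = k - 1 := by omega
    have h0 : (S ℝ (k : ℤ)).eval (2 * Real.cos (2 * θ)) +
        (S ℝ ((k : ℤ) - 1)).eval (2 * Real.cos (2 * θ)) = 0 := by
      have h1 := S_two_mul_real_cos (2 * θ) (k : ℤ)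
      have h2 := S_two_mul_real_cos (2 * θ) ((k : ℤ) - 1)
      have e : (((k : ℤ) : ℝ) + 1) * (2 * θ) = Real.pi + θ := by
        rw [← hmθ, hk]; push_cast; ring
      have e' : ((((k : ℤ) - 1 : ℤ) : ℝ) + 1) * (2 * θ) = Real.pi - θ := by
        rw [← hmθ, hk]; push_cast; ring
      rw [e, add_comm, Real.sin_add_pi] at h1
      rw [e', Real.sin_pi_sub] at h2
      have : ((S ℝ (k : ℤ)).eval (2 * Real.cos (2 * θ)) +
        (S ℝ ((k : ℤ) - 1)).eval (2 * Real.cos (2 * θ))) * Real.sin (2 * θ) = 0 := by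
        rw [add_mul, h1, h2]; ring
      exact (mul_eq_zero.mp this).resolve_right hsin
    rw [e1, e2, e3, e4, h0]
    simp

/-- The geometric representation of `W` on the real vector space with basis the simple roots. -/
def geomRep : W →* ((B →₀ ℝ) ≃ₗ[ℝ] (B →₀ ℝ)) :=
  cs.lift ⟨simpleRefl M, isLiftable_simpleRefl M⟩

lemma geomRep_mul_apply (u v : W) (x : B →₀ ℝ) :
    cs.geomRep (u * v) x = cs.geomRep u (cs.geomRep v x) := by
  rw [map_mul, LinearEquiv.mul_apply]

lemma geomRep_inv_apply_self (u : W) (x : B →₀ ℝ) :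
    cs.geomRep u⁻¹ (cs.geomRep u x) = x := by
  rw [← geomRep_mul_apply]; simp

lemma geomRep_apply_inv_self (u : W) (x : B →₀ ℝ) :
    cs.geomRep u (cs.geomRep u⁻¹ x) = x := by
  rw [← geomRep_mul_apply]; simp

lemma geomRep_simple_apply (i : B) (x : B →₀ ℝ) :
    cs.geomRep (cs.simple i) x = x - rootForm M (simpleRoot i) x • simpleRoot i := by
  rw [geomRep, lift_apply_simple, rootForm_simpleRoot]
  exact Module.reflection_apply _ _

lemma geomRep_simple_simpleRoot (i : B) :
    cs.geomRep (cs.simple i) (simpleRoot i) = -simpleRoot i := by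
  rw [geomRep_simple_apply, rootForm_simpleRoot, simpleCoroot_self, two_smul]; abel

lemma rootForm_geomRep (w : W) (x y : B →₀ ℝ) :
    rootForm M (cs.geomRep w x) (cs.geomRep w y) = rootForm M x y := by
  induction w using cs.simple_induction_left generalizing x y with
  | one => simp
  | mul_simple_left w i ih =>
    rw [geomRep_mul_apply, geomRep_mul_apply, ← ih x y, geomRep_simple_apply, geomRep_simple_apply]
    generalize cs.geomRep w x = a
    generalize cs.geomRep w y = b
    have h2 : rootForm M (simpleRoot i) (simpleRoot i) = 2 := by
      rw [rootForm_simpleRoot, simpleCoroot_self]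
    simp only [map_sub, map_smul, LinearMap.sub_apply, LinearMap.smul_apply, smul_eq_mul, h2,
      rootForm_comm M a (simpleRoot i)]
    ring

/-- A conjugate `u sᵢ u⁻¹` acts as the reflection in the root `u αᵢ`. -/
lemma geomRep_conj_apply (u : W) (i : B) (x : B →₀ ℝ) :
    cs.geomRep (u * cs.simple i * u⁻¹) x =
      x - rootForm M (cs.geomRep u (simpleRoot i)) x • cs.geomRep u (simpleRoot i) := by
  rw [geomRep_mul_apply, geomRep_mul_apply, geomRep_simple_apply, map_sub, map_smul,
    geomRep_apply_inv_self, ← cs.rootForm_geomRep u, geomRep_apply_inv_self]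

lemma rootForm_root_self (u : W) (i : B) :
    rootForm M (cs.geomRep u (simpleRoot i)) (cs.geomRep u (simpleRoot i)) = 2 := by
  rw [rootForm_geomRep, rootForm_simpleRoot, simpleCoroot_self]

lemma simpleRoot_nonneg (i : B) : 0 ≤ (simpleRoot i : B →₀ ℝ) := by
  simp [simpleRoot]

/-! ### Descents and the sign of roots -/

open Polynomial.Chebyshev in
/-- The action of a dihedral alternating word, ending in `j`, on the other simple root `αᵢ`. -/
lemma geomRep_alternatingWord (i j : B) (k : ℕ) :
    cs.geomRep (cs.wordProd (alternatingWord i j k)) (simpleRoot i) =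
      if Even k then
        (S ℝ k).eval (2 * Real.cos (Real.pi / M i j)) • simpleRoot i +
          (S ℝ ((k : ℤ) - 1)).eval (2 * Real.cos (Real.pi / M i j)) • simpleRoot j
      else
        (S ℝ ((k : ℤ) - 1)).eval (2 * Real.cos (Real.pi / M i j)) • simpleRoot i +
          (S ℝ k).eval (2 * Real.cos (Real.pi / M i j)) • simpleRoot j := by
  induction k with
  | zero => simp [alternatingWord]
  | succ k ih =>
    have hS : (S ℝ ((k + 1 : ℕ) : ℤ)).eval (2 * Real.cos (Real.pi / M i j)) =
        2 * Real.cos (Real.pi / M i j) * (S ℝ k).eval (2 * Real.cos (Real.pi / M i j)) -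
          (S ℝ ((k : ℤ) - 1)).eval (2 * Real.cos (Real.pi / M i j)) := by
      push_cast
      rw [S_add_one]
      simp
    have e : ((k + 1 : ℕ) : ℤ) - 1 = k := by push_cast; ring
    rw [alternatingWord_succ', wordProd_cons, geomRep_mul_apply, ih, hS, e]
    have hij := simpleCoroot_simpleRoot M i j
    have hji := simpleCoroot_simpleRoot M j i
    rw [M.symmetric j i] at hji
    by_cases hk : Even k
    · simp only [hk, if_true, Nat.even_add_one, not_true, if_false, geomRep_simple_apply,
        rootForm_simpleRoot, map_add, map_smul, hji, simpleCoroot_self]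
      module
    · simp only [hk, if_false, Nat.even_add_one, not_false_eq_true, if_true, geomRep_simple_apply,
        rootForm_simpleRoot, map_add, map_smul, hij, simpleCoroot_self]
      module

open Polynomial.Chebyshev in
lemma chebyshev_S_nonneg {m : ℕ} (hm : m ≠ 1) {k : ℕ} (hk : m = 0 ∨ k ≤ m) :
    0 ≤ (S ℝ ((k : ℤ) - 1)).eval (2 * Real.cos (Real.pi / m)) := by
  rcases Nat.eq_zero_or_pos m with rfl | hpos
  · simp [S_eval_two]
  have hk : k ≤ m := hk.resolve_left hpos.ne'
  have hmpos : (0 : ℝ) < m := by positivity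
  have h2 : (2 : ℝ) ≤ m := by exact_mod_cast (by omega : 2 ≤ m)
  have hk' : (k : ℝ) ≤ m := by exact_mod_cast hk
  have hsin : 0 < Real.sin (Real.pi / m) := by
    apply Real.sin_pos_of_pos_of_lt_pi (by positivity)
    rw [div_lt_iff₀ hmpos]
    nlinarith [Real.pi_pos]
  have h := S_two_mul_real_cos (Real.pi / m) ((k : ℤ) - 1)
  have h' : 0 ≤ Real.sin ((((k : ℤ) - 1 : ℤ) + 1 : ℝ) * (Real.pi / m)) := by
    apply Real.sin_nonneg_of_nonneg_of_le_pi
    · push_cast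
      have : (0 : ℝ) ≤ k := by positivity
      ring_nf
      positivity
    · push_cast
      rw [sub_add_cancel, mul_div_assoc', div_le_iff₀ hmpos]
      nlinarith [Real.pi_pos]
  rw [← h] at h'
  exact nonneg_of_mul_nonneg_left h' hsin

lemma alternatingWord_split (i j : B) (m n : ℕ) :
    ∃ z : List B, z.length = n ∧
      alternatingWord i j (n + m) = z ++ alternatingWord i j m := by
  induction n with
  | zero => exact ⟨[], rfl, by simp⟩
  | succ n ih =>
    obtain ⟨z, hz, h⟩ := ih
    refine ⟨(if Even (n + m) then j else i) :: z, by simp [hz], ?_⟩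
    rw [show n + 1 + m = n + m + 1 by ring, alternatingWord_succ', h]
    rfl

/-- If `ℓ(w) < ℓ(w sᵢ)` then `w αᵢ` is a nonnegative combination of simple roots. With `sⱼ` a
descent of `w`, one strips from the right of `w` the longest possible alternating word in
`sᵢ, sⱼ`, leaving an element `v` that has neither `sᵢ` nor `sⱼ` as a descent. -/
theorem geomRep_simpleRoot_nonneg (w : W) (i : B) (h : cs.length w < cs.length (w * cs.simple i)) :
    0 ≤ cs.geomRep w (simpleRoot i) := by
  induction hn : cs.length w using Nat.strong_induction_on generalizing w i with
  | _ n ih =>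
  subst hn
  by_cases hw1 : w = 1
  · subst hw1
    simpa using simpleRoot_nonneg i
  obtain ⟨j, hj⟩ := cs.exists_rightDescent_of_ne_one hw1
  have hij : i ≠ j := by
    rintro rfl
    exact absurd h (not_lt.mpr (le_of_lt hj))
  let P : ℕ → Prop := fun k =>
    cs.length (w * (cs.wordProd (alternatingWord i j k))⁻¹) + k = cs.length w
  have hP1 : P 1 := by
    have := (cs.isRightDescent_iff).mp hj
    simpa [P, alternatingWord] using this
  obtain ⟨k, hk1, hPk, hPk'⟩ : ∃ k, 1 ≤ k ∧ P k ∧ ¬ P (k + 1) := by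
    by_contra! hcon
    have hall : ∀ k, 1 ≤ k → P k := fun k hk => Nat.le_induction hP1 hcon k hk
    have := hall (cs.length w + 1) (by omega)
    simp only [P] at this
    omega
  set x := cs.wordProd (alternatingWord i j k) with hx
  set v := w * x⁻¹ with hv
  have hwv : w = v * x := by simp [hv]
  have hPk : cs.length v + k = cs.length w := hPk
  -- the letter that would be stripped next is not a descent of `v`
  have hnext : cs.length v < cs.length (v * cs.simple (if Even k then j else i)) := by
    have e : w * (cs.wordProd (alternatingWord i j (k + 1)))⁻¹ =
        v * cs.simple (if Even k then j else i) := by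
      rw [alternatingWord_succ', wordProd_cons, mul_inv_rev, inv_simple, ← mul_assoc]
    simp only [P, e] at hPk'
    rcases cs.length_mul_simple v (if Even k then j else i) with hl | hl <;> omega
  -- neither is the letter that was stripped last
  have hlast : cs.length v < cs.length (v * cs.simple (if Even k then i else j)) := by
    obtain ⟨k', rfl⟩ : ∃ k', k = k' + 1 := ⟨k - 1, by omega⟩
    have e : w = v * cs.simple (if Even (k' + 1) then i else j) *
        cs.wordProd (alternatingWord i j k') := by
      rw [hwv, hx, alternatingWord_succ', wordProd_cons, ← mul_assoc]
      by_cases hk' : Even k' <;> simp [hk', Nat.even_add_one]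
    have h1 := cs.length_mul_le (v * cs.simple (if Even (k' + 1) then i else j))
        (cs.wordProd (alternatingWord i j k'))
    have h2 := cs.length_wordProd_le (alternatingWord i j k')
    rw [← e] at h1
    rw [length_alternatingWord] at h2
    omega
  have hvlt : cs.length v < cs.length w := by omega
  have hvi : 0 ≤ cs.geomRep v (simpleRoot i) := by
    refine ih _ hvlt v i ?_ rfl
    by_cases hk' : Even k
    · simpa [hk'] using hlast
    · simpa [hk'] using hnext
  have hvj : 0 ≤ cs.geomRep v (simpleRoot j) := by
    refine ih _ hvlt v j ?_ rfl
    by_cases hk' : Even k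
    · simpa [hk'] using hnext
    · simpa [hk'] using hlast
  have hm1 : M i j ≠ 1 := M.off_diagonal i j hij
  -- otherwise the braid relation would make `sᵢ` a descent of `w`
  have hkm : M i j = 0 ∨ k + 1 ≤ M i j := by
    by_contra! hcon
    obtain ⟨hm0, hlt⟩ := hcon
    obtain ⟨z, hz, hzk⟩ := alternatingWord_split i j (M i j) (k - M i j)
    rw [Nat.sub_add_cancel (by omega)] at hzk
    obtain ⟨m', hm'⟩ : ∃ m', M i j = m' + 1 := ⟨M i j - 1, by omega⟩
    have hbraid := cs.wordProd_braidWord_eq i j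
    have e : w * cs.simple i = v * cs.wordProd z * cs.wordProd (alternatingWord i j m') := by
      rw [hwv, hx, hzk, wordProd_append, hbraid, braidWord, M.symmetric j i, hm',
        alternatingWord_succ, wordProd_concat]
      simp [mul_assoc]
    have h1 := cs.length_mul_le (v * cs.wordProd z) (cs.wordProd (alternatingWord i j m'))
    have h2 := cs.length_mul_le v (cs.wordProd z)
    have h3 := cs.length_wordProd_le z
    have h4 := cs.length_wordProd_le (alternatingWord i j m')
    rw [length_alternatingWord] at h4
    rw [← e] at h1
    omega
  have hS1 := chebyshev_S_nonneg hm1 (k := k) (by omega)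
  have hS2 := chebyshev_S_nonneg hm1 hkm
  rw [show ((k + 1 : ℕ) : ℤ) - 1 = k by push_cast; ring] at hS2
  rw [hwv, geomRep_mul_apply, hx, geomRep_alternatingWord]
  split_ifs
  · rw [map_add, map_smul, map_smul]
    exact add_nonneg (smul_nonneg hS2 hvi) (smul_nonneg hS1 hvj)
  · rw [map_add, map_smul, map_smul]
    exact add_nonneg (smul_nonneg hS1 hvi) (smul_nonneg hS2 hvj)

theorem geomRep_simpleRoot_nonpos (w : W) (i : B) (h : cs.length (w * cs.simple i) < cs.length w) :
    cs.geomRep w (simpleRoot i) ≤ 0 := by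
  have := cs.geomRep_simpleRoot_nonneg (w * cs.simple i) i (by simpa using h)
  rw [geomRep_mul_apply, geomRep_simple_simpleRoot, map_neg] at this
  exact neg_nonneg.mp this

lemma root_nonneg_or_nonpos (u : W) (i : B) :
    0 ≤ cs.geomRep u (simpleRoot i) ∨ cs.geomRep u (simpleRoot i) ≤ 0 := by
  rcases cs.length_mul_simple u i with h | h
  · exact Or.inl (cs.geomRep_simpleRoot_nonneg u i (by omega))
  · exact Or.inr (cs.geomRep_simpleRoot_nonpos u i (by omega))

lemma geomRep_injective : Function.Injective cs.geomRep := by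
  rw [injective_iff_map_eq_one]
  intro w hw
  by_contra hne
  obtain ⟨i, hi⟩ := cs.exists_rightDescent_of_ne_one hne
  have h1 := cs.geomRep_simpleRoot_nonpos w i hi
  rw [hw, LinearEquiv.coe_one, id] at h1
  have h2 := le_antisymm h1 (simpleRoot_nonneg i)
  simp [simpleRoot] at h2

/-! ### Positive roots and reflections -/

/-- `β` is the positive root of the reflection `t`. -/
def IsPosRootOf (t : W) (β : B →₀ ℝ) : Prop :=
  ∃ u i, β = cs.geomRep u (simpleRoot i) ∧ t = u * cs.simple i * u⁻¹ ∧ 0 ≤ β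

lemma IsReflection.exists_isPosRootOf {t : W} (ht : cs.IsReflection t) :
    ∃ β, cs.IsPosRootOf t β := by
  obtain ⟨u, i, rfl⟩ := ht
  rcases cs.root_nonneg_or_nonpos u i with h | h
  · exact ⟨_, u, i, rfl, rfl, h⟩
  · refine ⟨_, u * cs.simple i, i, rfl, by simp [mul_assoc], ?_⟩
    rw [geomRep_mul_apply, geomRep_simple_simpleRoot, map_neg]
    exact neg_nonneg.mpr h

variable {cs}

lemma IsPosRootOf.isReflection {t : W} {β : B →₀ ℝ} (h : cs.IsPosRootOf t β) :
    cs.IsReflection t := by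
  obtain ⟨u, i, -, rfl, -⟩ := h
  exact ⟨u, i, rfl⟩

lemma IsPosRootOf.rootForm_self {t : W} {β : B →₀ ℝ} (h : cs.IsPosRootOf t β) :
    rootForm M β β = 2 := by
  obtain ⟨u, i, rfl, -, -⟩ := h
  exact cs.rootForm_root_self u i

lemma IsPosRootOf.geomRep_apply {t : W} {β : B →₀ ℝ} (h : cs.IsPosRootOf t β) (x : B →₀ ℝ) :
    cs.geomRep t x = x - rootForm M β x • β := by
  obtain ⟨u, i, rfl, rfl, -⟩ := h
  exact cs.geomRep_conj_apply u i x

lemma IsPosRootOf.ne_zero {t : W} {β : B →₀ ℝ} (h : cs.IsPosRootOf t β) : β ≠ 0 := by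
  rintro rfl
  simpa using h.rootForm_self

/-- A simple reflection `sₖ` permutes the positive roots other than `αₖ`. -/
lemma IsPosRootOf.simple_conj {t : W} {β : B →₀ ℝ} (h : cs.IsPosRootOf t β) {k : B}
    (hk : t ≠ cs.simple k) :
    cs.IsPosRootOf (cs.simple k * t * cs.simple k) (cs.geomRep (cs.simple k) β) := by
  have hform := h.rootForm_self
  have happly := h.geomRep_apply
  obtain ⟨u, i, hβ, ht, hpos⟩ := h
  refine ⟨cs.simple k * u, i, by rw [geomRep_mul_apply, hβ], by simp [ht, mul_assoc], ?_⟩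
  have hor := cs.root_nonneg_or_nonpos (cs.simple k * u) i
  rw [geomRep_mul_apply, ← hβ] at hor
  refine hor.resolve_right fun hneg => hk ?_
  -- `sₖ` changes only the `k`-th coordinate, so the other coordinates of `β` vanish
  have hβk : β = β k • simpleRoot k := by
    ext b
    by_cases hb : b = k
    · simp [hb, simpleRoot]
    · have h1 := hneg b
      have h2 := hpos b
      rw [geomRep_simple_apply] at h1
      simp [simpleRoot, Ne.symm hb] at h1 h2 ⊢
      exact le_antisymm h1 h2
  generalize β k = c at hβk
  have hc : c * c = 1 := by
    rw [hβk] at hform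
    simp only [map_smul, LinearMap.smul_apply, smul_eq_mul, rootForm_simpleRoot,
      simpleCoroot_self] at hform
    linarith
  apply cs.geomRep_injective
  ext1 x
  rw [happly, geomRep_simple_apply, hβk, map_smul, LinearMap.smul_apply, smul_smul, smul_eq_mul,
    mul_right_comm, hc, one_mul]

lemma IsPosRootOf.length_mul_lt {t : W} {β : B →₀ ℝ} (h : cs.IsPosRootOf t β) {u : W}
    (hu : ¬ 0 ≤ cs.geomRep u β) : cs.length (u * t) < cs.length u := by
  induction hn : cs.length u using Nat.strong_induction_on generalizing u t β with
  | _ n ih =>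
  subst hn
  have hu1 : u ≠ 1 := by
    rintro rfl
    obtain ⟨_, _, _, _, hpos⟩ := h
    exact hu (by simpa using hpos)
  obtain ⟨k, hk⟩ := cs.exists_rightDescent_of_ne_one hu1
  by_cases htk : t = cs.simple k
  · rw [htk]; exact hk
  have h1 := ih _ hk (h.simple_conj htk) (u := u * cs.simple k)
    (by rwa [← geomRep_mul_apply, simple_mul_simple_cancel_right]) rfl
  have e : u * cs.simple k * (cs.simple k * t * cs.simple k) = u * t * cs.simple k := by
    simp [← mul_assoc]
  rw [e] at h1
  have h2 := cs.isRightDescent_iff.mp hk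
  rcases cs.length_mul_simple (u * t) k with h3 | h3 <;> omega

/-- Length comparison along a reflection is read off from the sign of a root. -/
lemma IsPosRootOf.lt_length_mul_iff {t : W} {β : B →₀ ℝ} (h : cs.IsPosRootOf t β) (u : W) :
    cs.length u < cs.length (u * t) ↔ 0 ≤ cs.geomRep u β := by
  constructor
  · intro hlt
    by_contra hcon
    exact absurd (h.length_mul_lt hcon) (by omega)
  · intro hu
    have e : cs.geomRep (u * t) β = -cs.geomRep u β := by
      rw [geomRep_mul_apply, h.geomRep_apply, h.rootForm_self, two_smul, ← map_neg]
      congr 1; abel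
    have h1 := h.length_mul_lt (u := u * t) (by
      rw [e]
      intro hcon
      have h0 := le_antisymm (neg_nonneg.mp hcon) hu
      exact h.ne_zero ((LinearEquiv.map_eq_zero_iff _).mp h0))
    rwa [mul_assoc, h.isReflection.mul_self, mul_one] at h1

variable (cs)

/-- Right multiplication by a simple reflection preserves the edges of the Bruhat graph, except
those labelled by that reflection. -/
lemma length_lt_mul_simple {t u : W} (ht : cs.IsReflection t) {k : B} (hk : t ≠ cs.simple k)
    (h : cs.length u < cs.length (u * t)) :
    cs.length (u * cs.simple k) < cs.length (u * t * cs.simple k) := by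
  obtain ⟨β, hβ⟩ := ht.exists_isPosRootOf
  have h1 := (hβ.lt_length_mul_iff u).mp h
  have h2 := ((hβ.simple_conj hk).lt_length_mul_iff (u * cs.simple k)).mpr (by
    rwa [← geomRep_mul_apply, simple_mul_simple_cancel_right])
  simpa [← mul_assoc] using h2

/-! ### Bruhat order and simple reflections -/

lemma bruhatLE_mul_simple {u : W} {k : B} (h : cs.length u < cs.length (u * cs.simple k)) :
    cs.BruhatLE u (u * cs.simple k) :=
  Relation.ReflTransGen.single ⟨⟨_, cs.isReflection_simple k, rfl⟩, h⟩

lemma bruhatLE_of_mul_simple {u : W} {k : B} (h : cs.IsRightDescent u k) :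
    cs.BruhatLE (u * cs.simple k) u := by
  simpa using cs.bruhatLE_mul_simple (u := u * cs.simple k) (k := k)
    (by simpa [IsRightDescent] using h)

lemma BruhatLE.inv {u v : W} (h : cs.BruhatLE u v) : cs.BruhatLE u⁻¹ v⁻¹ := by
  induction h with
  | refl => exact Relation.ReflTransGen.refl
  | @tail b _ _ hstep ih =>
    obtain ⟨⟨t, ht, rfl⟩, hlt⟩ := hstep
    refine ih.tail ⟨⟨b * t * b⁻¹, ht.conj b, ?_⟩, by simpa only [length_inv] using hlt⟩
    simp [mul_assoc, ht.inv]

lemma BruhatLE.length_le {u v : W} (h : cs.BruhatLE u v) : cs.length u ≤ cs.length v := by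
  induction h with
  | refl => exact le_rfl
  | tail _ hstep ih => exact ih.trans hstep.2.le

open Classical in
/-- The shorter of the two elements `w` and `w sₖ`. -/
def lowerCoset (k : B) (w : W) : W := if cs.IsRightDescent w k then w * cs.simple k else w

lemma lowerCoset_bruhatLE (k : B) (w : W) : cs.BruhatLE (cs.lowerCoset k w) w := by
  unfold lowerCoset
  split_ifs with h
  · exact cs.bruhatLE_of_mul_simple h
  · exact Relation.ReflTransGen.refl

lemma lowerCoset_mul_simple (k : B) (w : W) :
    cs.lowerCoset k (w * cs.simple k) = cs.lowerCoset k w := by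
  by_cases h : cs.IsRightDescent w k
  · have hmul := cs.isRightDescent_iff_not_isRightDescent_mul.mp h
    simp [lowerCoset, h, hmul]
  · have hmul : cs.IsRightDescent (w * cs.simple k) k := by
      rw [isRightDescent_iff_not_isRightDescent_mul]
      simpa using h
    simp [lowerCoset, h, hmul]

/-- The lifting property of Bruhat order, phrased as monotonicity of `lowerCoset`. -/
lemma BruhatLE.lowerCoset {u v : W} (h : cs.BruhatLE u v) (k : B) :
    cs.BruhatLE (cs.lowerCoset k u) (cs.lowerCoset k v) := by
  induction h with
  | refl => exact Relation.ReflTransGen.refl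
  | @tail b _ _ hstep ih =>
    refine ih.trans ?_
    obtain ⟨⟨t, ht, rfl⟩, hlt⟩ := hstep
    by_cases htk : t = cs.simple k
    · rw [htk, lowerCoset_mul_simple]
    by_cases hd : cs.IsRightDescent (b * t) k
    · have h1 := cs.length_lt_mul_simple ht htk hlt
      have h2 : cs.lowerCoset k (b * t) = b * t * cs.simple k := by
        simp [CoxeterSystem.lowerCoset, hd]
      rw [h2, ← lowerCoset_mul_simple]
      refine (cs.lowerCoset_bruhatLE k _).trans (Relation.ReflTransGen.single ⟨⟨_,
        ht.conj (cs.simple k), by simp [← mul_assoc]⟩, h1⟩)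
    · have h2 : cs.lowerCoset k (b * t) = b * t := by simp [CoxeterSystem.lowerCoset, hd]
      rw [h2]
      exact (cs.lowerCoset_bruhatLE k b).trans (Relation.ReflTransGen.single ⟨⟨t, ht, rfl⟩, hlt⟩)

/-! ### Absolute length and the moved space -/

lemma exists_reflection_factorization (w : W) :
    ∃ l : List W, l.length = cs.absLength w ∧ (∀ t ∈ l, cs.IsReflection t) ∧ l.prod = w := by
  refine Nat.sInf_mem
    (s := {n : ℕ | ∃ l : List W, l.length = n ∧ (∀ t ∈ l, cs.IsReflection t) ∧ l.prod = w}) ?_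
  obtain ⟨ω, rfl⟩ := cs.wordProd_surjective w
  refine ⟨_, ω.map cs.simple, rfl, ?_, rfl⟩
  intro t ht
  obtain ⟨i, -, rfl⟩ := List.mem_map.mp ht
  exact cs.isReflection_simple i

lemma absLength_le {w : W} {l : List W} (hl : ∀ t ∈ l, cs.IsReflection t) (hw : l.prod = w) :
    cs.absLength w ≤ l.length :=
  Nat.sInf_le ⟨l, rfl, hl, hw⟩

lemma absLength_conj_le (u w : W) : cs.absLength (u * w * u⁻¹) ≤ cs.absLength w := by
  obtain ⟨l, hlen, hl, rfl⟩ := cs.exists_reflection_factorization w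
  rw [← hlen, ← List.length_map (f := MulAut.conj u) (as := l)]
  refine cs.absLength_le ?_ ?_
  · intro t ht
    obtain ⟨t, ht', rfl⟩ := List.mem_map.mp ht
    exact (hl t ht').conj u
  · rw [← map_list_prod]
    rfl

lemma absLength_simple_conj (k : B) (w : W) :
    cs.absLength (cs.simple k * w * cs.simple k) = cs.absLength w := by
  apply le_antisymm
  · simpa using cs.absLength_conj_le (cs.simple k) w
  · simpa [← mul_assoc] using cs.absLength_conj_le (cs.simple k) (cs.simple k * w * cs.simple k)

lemma absLength_mul_simple_le (k : B) (w : W) :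
    cs.absLength (w * cs.simple k) ≤ cs.absLength w + 1 := by
  obtain ⟨l, hlen, hl, rfl⟩ := cs.exists_reflection_factorization w
  rw [← hlen]
  have := cs.absLength_le (l := l ++ [cs.simple k]) (w := l.prod * cs.simple k) (by
    intro t ht
    rcases List.mem_append.mp ht with h | h
    · exact hl t h
    · rw [List.mem_singleton.mp h]
      exact cs.isReflection_simple k) (by simp)
  simpa using this

/-- The moved space `(1 - w) V` of `w` in the geometric representation `V`. -/
def moved (w : W) : Submodule ℝ (B →₀ ℝ) :=
  LinearMap.range (LinearMap.id - (cs.geomRep w).toLinearMap)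

lemma mem_moved {w : W} {y : B →₀ ℝ} : y ∈ cs.moved w ↔ ∃ x, x - cs.geomRep w x = y := by
  simp [moved]

lemma finrank_moved_list_prod (l : List W) (hl : ∀ t ∈ l, cs.IsReflection t) :
    FiniteDimensional ℝ (cs.moved l.prod) ∧ Module.finrank ℝ (cs.moved l.prod) ≤ l.length := by
  induction l with
  | nil =>
    have h : cs.moved 1 = ⊥ := by
      rw [eq_bot_iff]
      intro y hy
      obtain ⟨x, rfl⟩ := cs.mem_moved.mp hy
      simp
    rw [List.prod_nil, h]
    exact ⟨inferInstance, by simp⟩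
  | cons t l ih =>
    obtain ⟨hfin, hrank⟩ := ih fun t' ht' => hl t' (List.mem_cons_of_mem _ ht')
    obtain ⟨β, hβ⟩ := (hl t List.mem_cons_self).exists_isPosRootOf
    have hle : cs.moved (t :: l).prod ≤ Submodule.span ℝ {β} ⊔ cs.moved l.prod := by
      intro y hy
      obtain ⟨x, rfl⟩ := cs.mem_moved.mp hy
      rw [List.prod_cons, geomRep_mul_apply, hβ.geomRep_apply]
      refine Submodule.mem_sup.mpr ⟨rootForm M β (cs.geomRep l.prod x) • β,
        Submodule.smul_mem _ _ (Submodule.mem_span_singleton_self β), _,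
        cs.mem_moved.mpr ⟨x, rfl⟩, ?_⟩
      abel
    refine ⟨Submodule.finiteDimensional_of_le hle, ?_⟩
    have h1 := Submodule.finrank_mono hle
    have h2 := Submodule.finrank_add_le_finrank_add_finrank (Submodule.span ℝ {β}) (cs.moved l.prod)
    have h3 := finrank_span_le_card (R := ℝ) ({β} : Set (B →₀ ℝ))
    simp only [Set.toFinset_singleton, Finset.card_singleton] at h3
    rw [List.length_cons]
    omega

instance finiteDimensional_moved (w : W) : FiniteDimensional ℝ (cs.moved w) := by
  obtain ⟨l, -, hl, rfl⟩ := cs.exists_reflection_factorization w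
  exact (cs.finrank_moved_list_prod l hl).1

lemma finrank_moved_le (w : W) : Module.finrank ℝ (cs.moved w) ≤ cs.absLength w := by
  obtain ⟨l, hlen, hl, hw⟩ := cs.exists_reflection_factorization w
  have := (cs.finrank_moved_list_prod l hl).2
  rwa [hw, hlen] at this

lemma finrank_moved_simple_conj (k : B) (w : W) :
    Module.finrank ℝ (cs.moved (cs.simple k * w * cs.simple k)) =
      Module.finrank ℝ (cs.moved w) := by
  have h : cs.moved (cs.simple k * w * cs.simple k) =
      (cs.moved w).map (cs.geomRep (cs.simple k)).toLinearMap := by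
    ext y
    rw [Submodule.mem_map, mem_moved]
    constructor
    · rintro ⟨x, rfl⟩
      refine ⟨_, cs.mem_moved.mpr ⟨cs.geomRep (cs.simple k) x, rfl⟩, ?_⟩
      simp only [LinearEquiv.coe_coe, map_sub, ← geomRep_mul_apply, simple_mul_simple_self,
        map_one, LinearEquiv.coe_one, id, mul_assoc]
    · rintro ⟨z, hz, rfl⟩
      obtain ⟨x, rfl⟩ := cs.mem_moved.mp hz
      refine ⟨cs.geomRep (cs.simple k) x, ?_⟩
      simp only [LinearEquiv.coe_coe, map_sub, ← geomRep_mul_apply,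
        simple_mul_simple_cancel_right]
  rw [h]
  exact LinearEquiv.finrank_map_eq _ _

/-- An element commuting with `sₖ` and not having it as a descent fixes `αₖ`. -/
lemma geomRep_simpleRoot_eq_self {w : W} {k : B}
    (hcomm : cs.simple k * w = w * cs.simple k)
    (hasc : cs.length w < cs.length (w * cs.simple k)) :
    cs.geomRep w (simpleRoot k) = simpleRoot k := by
  have hpos := cs.geomRep_simpleRoot_nonneg w k hasc
  have hform := cs.rootForm_root_self w k
  have hconj := cs.geomRep_conj_apply w k (cs.geomRep w (simpleRoot k))
  rw [← hcomm, mul_inv_cancel_right, hform, geomRep_simple_apply] at hconj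
  generalize cs.geomRep w (simpleRoot k) = β at *
  have hβ : β = (rootForm M (simpleRoot k) β / 2) • simpleRoot k := by
    have h2 := sub_right_injective hconj
    rw [div_eq_inv_mul, mul_smul, h2, smul_smul]
    norm_num
  generalize rootForm M (simpleRoot k) β / 2 = c at hβ
  subst hβ
  have hc : 0 ≤ c := by simpa [simpleRoot] using hpos k
  simp only [map_smul, LinearMap.smul_apply, smul_eq_mul, rootForm_simpleRoot,
    simpleCoroot_self] at hform
  have : c = 1 := by nlinarith
  rw [this, one_smul]

/-- If the involution `w` fixes `αₖ`, the moved space of `w sₖ` contains that of `w` and the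
additional vector `αₖ`, on which `w` acts as `1` rather than as `-1`. -/
lemma moved_lt_moved_mul_simple {w : W} (hw : w * w = 1) {k : B}
    (hfix : cs.geomRep w (simpleRoot k) = simpleRoot k) :
    cs.moved w < cs.moved (w * cs.simple k) := by
  have hα : simpleRoot k ∈ cs.moved (w * cs.simple k) := by
    refine cs.mem_moved.mpr ⟨(1 / 2 : ℝ) • simpleRoot k, ?_⟩
    rw [geomRep_mul_apply, map_smul, geomRep_simple_simpleRoot, map_smul, map_neg, hfix]
    module
  refine lt_of_le_of_ne ?_ ?_
  · intro y hy
    obtain ⟨x, rfl⟩ := cs.mem_moved.mp hy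
    have e : x - cs.geomRep w x = (x - cs.geomRep (w * cs.simple k) x) -
        rootForm M (simpleRoot k) x • simpleRoot k := by
      rw [geomRep_mul_apply, geomRep_simple_apply, map_sub, map_smul, hfix]
      abel
    rw [e]
    exact Submodule.sub_mem _ (cs.mem_moved.mpr ⟨x, rfl⟩) (Submodule.smul_mem _ _ hα)
  · intro heq
    rw [← heq] at hα
    obtain ⟨x, hx⟩ := cs.mem_moved.mp hα
    have h1 : cs.geomRep w (simpleRoot k) = -simpleRoot k := by
      rw [← hx, map_sub, ← geomRep_mul_apply, hw]
      simp
    rw [hfix] at h1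
    have h2 := DFunLike.congr_fun h1 k
    simp [simpleRoot] at h2
    linarith

/-! ### Descending through involutions -/

lemma length_simple_conj_add_two {w : W} (hw : w * w = 1) {k : B} (hk : cs.IsRightDescent w k)
    (hcomm : cs.simple k * w ≠ w * cs.simple k) :
    cs.length (cs.simple k * w * cs.simple k) + 2 = cs.length w := by
  have hinv : w⁻¹ = w := inv_eq_of_mul_eq_one_left hw
  have hd := cs.isRightDescent_iff.mp hk
  have hl : cs.length (cs.simple k * w) = cs.length (w * cs.simple k) := by
    rw [← length_inv, mul_inv_rev, hinv, inv_simple]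
  have ht : cs.IsReflection (w * cs.simple k * w) := by
    simpa [hinv] using (cs.isReflection_simple k).conj w
  have hne : w * cs.simple k * w ≠ cs.simple k := by
    intro h
    apply hcomm
    nth_rw 1 [← h]
    rw [mul_assoc, hw, mul_one]
  -- `sₖ w` is joined to `w` by the reflection `w sₖ w`
  have e : cs.simple k * w * (w * cs.simple k * w) = w := by
    simp only [← mul_assoc]
    rw [mul_assoc (cs.simple k) w w, hw]
    simp
  have h1 := cs.length_lt_mul_simple (u := cs.simple k * w) ht hne (by rw [e]; omega)
  rw [e] at h1
  rcases cs.length_mul_simple (cs.simple k * w) k with h2 | h2 <;> omega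

/-- For an involution `w` this is `w` if `sₖ` is not a descent of `w`; otherwise it is `w sₖ` or
`sₖ w sₖ`, according as `sₖ` commutes with `w` or not. -/
def lowerInvol (k : B) (w : W) : W := (cs.lowerCoset k (cs.lowerCoset k w)⁻¹)⁻¹

lemma BruhatLE.lowerInvol {u v : W} (h : cs.BruhatLE u v) (k : B) :
    cs.BruhatLE (cs.lowerInvol k u) (cs.lowerInvol k v) :=
  BruhatLE.inv cs (BruhatLE.lowerCoset cs (BruhatLE.inv cs (BruhatLE.lowerCoset cs h k)) k)

lemma lowerInvol_of_not_descent {w : W} (hw : w * w = 1) {k : B} (hk : ¬ cs.IsRightDescent w k) :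
    cs.lowerInvol k w = w := by
  have hinv : w⁻¹ = w := inv_eq_of_mul_eq_one_left hw
  simp [lowerInvol, lowerCoset, hk, hinv]

lemma lowerInvol_of_comm {w : W} (hw : w * w = 1) {k : B} (hk : cs.IsRightDescent w k)
    (hcomm : cs.simple k * w = w * cs.simple k) :
    cs.lowerInvol k w = w * cs.simple k := by
  have hinv : w⁻¹ = w := inv_eq_of_mul_eq_one_left hw
  have h := cs.isRightDescent_iff_not_isRightDescent_mul.mp hk
  simp [lowerInvol, lowerCoset, hk, hinv, hcomm, h]

lemma lowerInvol_of_not_comm {w : W} (hw : w * w = 1) {k : B} (hk : cs.IsRightDescent w k)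
    (hcomm : cs.simple k * w ≠ w * cs.simple k) :
    cs.lowerInvol k w = cs.simple k * w * cs.simple k := by
  have hinv : w⁻¹ = w := inv_eq_of_mul_eq_one_left hw
  have h := cs.length_simple_conj_add_two hw hk hcomm
  have h' : cs.IsRightDescent (cs.simple k * w) k := by
    have := cs.length_le_length_mul_add_left (cs.simple k) w
    rw [length_simple] at this
    unfold IsRightDescent
    omega
  simp [lowerInvol, lowerCoset, hk, hinv, h', mul_assoc]

lemma mul_simple_mul_self {w : W} (hw : w * w = 1) {k : B}
    (hcomm : cs.simple k * w = w * cs.simple k) :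
    w * cs.simple k * (w * cs.simple k) = 1 := by
  rw [mul_assoc, ← mul_assoc (cs.simple k), hcomm]
  simp [hw]

lemma simple_conj_mul_self {w : W} (hw : w * w = 1) (k : B) :
    cs.simple k * w * cs.simple k * (cs.simple k * w * cs.simple k) = 1 := by
  rw [← mul_assoc, ← mul_assoc, simple_mul_simple_cancel_right, mul_assoc (cs.simple k), hw]
  simp

/-- The absolute length of an involution is the dimension of its moved space. -/
theorem absLength_eq_finrank_moved {w : W} (hw : w * w = 1) :
    cs.absLength w = Module.finrank ℝ (cs.moved w) := by
  refine le_antisymm ?_ (cs.finrank_moved_le w)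
  induction hn : cs.length w using Nat.strong_induction_on generalizing w with
  | _ n ih =>
  subst hn
  by_cases hw1 : w = 1
  · subst hw1
    exact (cs.absLength_le (l := []) (by simp) (by simp)).trans (Nat.zero_le _)
  obtain ⟨k, hk⟩ := cs.exists_rightDescent_of_ne_one hw1
  by_cases hcomm : cs.simple k * w = w * cs.simple k
  · have hw' := cs.mul_simple_mul_self hw hcomm
    have h1 := ih _ hk hw' rfl
    have h2 := cs.absLength_mul_simple_le k (w * cs.simple k)
    have hfix := cs.geomRep_simpleRoot_eq_self (w := w * cs.simple k) (k := k)
      (by rw [← mul_assoc, hcomm])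
      (by simpa [IsRightDescent] using hk)
    have h3 := Submodule.finrank_lt_finrank_of_lt (cs.moved_lt_moved_mul_simple hw' hfix)
    rw [simple_mul_simple_cancel_right] at h2 h3
    omega
  · have hlen := cs.length_simple_conj_add_two hw hk hcomm
    have h1 := ih _ (by omega) (cs.simple_conj_mul_self hw k) rfl
    rwa [absLength_simple_conj, finrank_moved_simple_conj] at h1

lemma lowerInvol_mul_self {w : W} (hw : w * w = 1) {k : B} (hk : cs.IsRightDescent w k) :
    cs.lowerInvol k w * cs.lowerInvol k w = 1 := by
  by_cases hcomm : cs.simple k * w = w * cs.simple k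
  · rw [cs.lowerInvol_of_comm hw hk hcomm]
    exact cs.mul_simple_mul_self hw hcomm
  · rw [cs.lowerInvol_of_not_comm hw hk hcomm]
    exact cs.simple_conj_mul_self hw k

lemma length_lowerInvol_lt {w : W} (hw : w * w = 1) {k : B} (hk : cs.IsRightDescent w k) :
    cs.length (cs.lowerInvol k w) < cs.length w := by
  by_cases hcomm : cs.simple k * w = w * cs.simple k
  · rw [cs.lowerInvol_of_comm hw hk hcomm]
    exact hk
  · rw [cs.lowerInvol_of_not_comm hw hk hcomm]
    have := cs.length_simple_conj_add_two hw hk hcomm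
    omega

/-- A descent step lowers the rank `(ℓ + ℓᵃ) / 2` by exactly one. -/
lemma rank_lowerInvol {w : W} (hw : w * w = 1) {k : B} (hk : cs.IsRightDescent w k) :
    cs.length (cs.lowerInvol k w) + cs.absLength (cs.lowerInvol k w) + 2 =
      cs.length w + cs.absLength w := by
  by_cases hcomm : cs.simple k * w = w * cs.simple k
  · rw [cs.lowerInvol_of_comm hw hk hcomm]
    have hw' := cs.mul_simple_mul_self hw hcomm
    have hfix := cs.geomRep_simpleRoot_eq_self (w := w * cs.simple k) (k := k)
      (by rw [← mul_assoc, hcomm])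
      (by simpa [IsRightDescent] using hk)
    have h1 := Submodule.finrank_lt_finrank_of_lt (cs.moved_lt_moved_mul_simple hw' hfix)
    have h2 := cs.absLength_mul_simple_le k (w * cs.simple k)
    rw [simple_mul_simple_cancel_right] at h1 h2
    rw [← cs.absLength_eq_finrank_moved hw, ← cs.absLength_eq_finrank_moved hw'] at h1
    have h3 := cs.isRightDescent_iff.mp hk
    omega
  · rw [cs.lowerInvol_of_not_comm hw hk hcomm, absLength_simple_conj]
    have := cs.length_simple_conj_add_two hw hk hcomm
    omega

/-- An involution with descent `sₖ` can be recovered from its descent step, since `sₖ` commutes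
with the former if and only if it commutes with the latter. -/
lemma lowerInvol_injective {w σ : W} (hw : w * w = 1) (hσ : σ * σ = 1) {k : B}
    (hwk : cs.IsRightDescent w k) (hσk : cs.IsRightDescent σ k)
    (h : cs.lowerInvol k w = cs.lowerInvol k σ) : w = σ := by
  have key : ∀ {a b : W}, cs.simple k * a = a * cs.simple k →
      a * cs.simple k = cs.simple k * b * cs.simple k →
      cs.simple k * b = b * cs.simple k := by
    intro a b ha hab
    have hb : a = cs.simple k * b := mul_right_cancel hab
    rw [hb, simple_mul_simple_cancel_left] at ha
    nth_rw 2 [ha]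
    rw [simple_mul_simple_cancel_right]
  by_cases hcw : cs.simple k * w = w * cs.simple k <;>
    by_cases hcσ : cs.simple k * σ = σ * cs.simple k
  · rw [cs.lowerInvol_of_comm hw hwk hcw, cs.lowerInvol_of_comm hσ hσk hcσ] at h
    exact mul_right_cancel h
  · rw [cs.lowerInvol_of_comm hw hwk hcw, cs.lowerInvol_of_not_comm hσ hσk hcσ] at h
    exact absurd (key hcw h) hcσ
  · rw [cs.lowerInvol_of_not_comm hw hwk hcw, cs.lowerInvol_of_comm hσ hσk hcσ] at h
    exact absurd (key hcσ h.symm) hcw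
  · rw [cs.lowerInvol_of_not_comm hw hwk hcw, cs.lowerInvol_of_not_comm hσ hσk hcσ] at h
    exact mul_left_cancel (mul_right_cancel h)

/-- The rank `(ℓ + ℓᵃ) / 2` is strictly monotone on involutions under Bruhat order. -/
theorem rank_le_and_eq_of_bruhatLE (w σ : W) (hw : w * w = 1) (hσ : σ * σ = 1)
    (hle : cs.BruhatLE w σ) :
    cs.length w + cs.absLength w ≤ cs.length σ + cs.absLength σ ∧
      (cs.length w + cs.absLength w = cs.length σ + cs.absLength σ → w = σ) := by
  induction hn : cs.length σ using Nat.strong_induction_on generalizing w σ with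
  | _ n ih =>
  subst hn
  by_cases hσ1 : σ = 1
  · have h := BruhatLE.length_le cs hle
    rw [hσ1, length_one, Nat.le_zero, length_eq_zero_iff] at h
    rw [h, hσ1]
    exact ⟨le_rfl, fun _ => rfl⟩
  obtain ⟨k, hk⟩ := cs.exists_rightDescent_of_ne_one hσ1
  have hσ' := cs.lowerInvol_mul_self hσ hk
  have hrσ := cs.rank_lowerInvol hσ hk
  have hlt := cs.length_lowerInvol_lt hσ hk
  have hle' := BruhatLE.lowerInvol cs hle k
  by_cases hwk : cs.IsRightDescent w k
  · have hrw := cs.rank_lowerInvol hw hwk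
    obtain ⟨h1, h2⟩ := ih _ hlt _ _ (cs.lowerInvol_mul_self hw hwk) hσ' hle' rfl
    refine ⟨by omega, fun heq => ?_⟩
    exact cs.lowerInvol_injective hw hσ hwk hk (h2 (by omega))
  · rw [cs.lowerInvol_of_not_descent hw hwk] at hle'
    obtain ⟨h1, -⟩ := ih _ hlt _ _ hw hσ' hle' rfl
    exact ⟨by omega, fun heq => by omega⟩

/-- If `w` and `σ` are involutions in a Coxeter group with `w ≤ σ` in the Bruhat order and
`ℓ(w) + ℓᵃ(w) = ℓ(σ) + ℓᵃ(σ)`, then `w = σ`. -/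
theorem bruhatLE_involutions_eq_of_length_add_absLength_eq
    (w σ : W) (hw : w * w = 1) (hσ : σ * σ = 1)
    (hle : cs.BruhatLE w σ)
    (hsum : cs.length w + cs.absLength w = cs.length σ + cs.absLength σ) :
    w = σ :=
  (cs.rank_le_and_eq_of_bruhatLE w σ hw hσ hle).2 hsum

end CoxeterSystem

end
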